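/- arXiv:2005.07851 — 4 statements merged into one kernel-verified Lean document; each statement's English description precedes it below -/
import Mathlib

section
/- Let a < b, β > 0, Δt > 0. Let h*, h̃ : [a,b] → ℝ be continuously differentiable with h̃(a) = h̃(b) = 0 and h*(a) = h*(b) = 0, and suppose that for every Lipschitz function v : [a,b] → ℝ with v(a) = v(b) = 0 the weak-form identity ∫_a^b [ (β/Δt)·(h̃(x) − h*(x))·v(x)/√(1 + h̃′(x)²) + (h̃′(x) + h*′(x))·v′(x)/(√(1 + h̃′(x)²) + √(1 + h*′(x)²)) ] dx = 0 holds (v′ denoting the almost-everywhere derivative). Then (β/Δt)·∫_a^b (h̃ − h*)²/√(1 + (h̃′)²) dx + ∫_a^b ( √(1 + (h̃′)²) − √(1 + (h*′)²) ) dx = 0. -/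
/-- One-step energy identity for the semi-implicit capillary-surface update:
testing the weak form with `v = h̃ - h*` yields the energy identity. -/
theorem semi_implicit_energy_identity (a b β Δt : ℝ) (hab : a < b) (hβ : 0 < β)
    (hΔt : 0 < Δt) (hstar htil hstar' htil' : ℝ → ℝ)
    (hds : ∀ x ∈ Set.Icc a b, HasDerivWithinAt hstar (hstar' x) (Set.Icc a b) x)
    (hcs : ContinuousOn hstar' (Set.Icc a b))
    (hdt : ∀ x ∈ Set.Icc a b, HasDerivWithinAt htil (htil' x) (Set.Icc a b) x)
    (hct : ContinuousOn htil' (Set.Icc a b))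
    (hsa : hstar a = 0) (hsb : hstar b = 0) (hta : htil a = 0) (htb : htil b = 0)
    (hweak : ∀ (v : ℝ → ℝ) (K : NNReal), LipschitzOnWith K v (Set.Icc a b) →
      v a = 0 → v b = 0 →
      (∫ x in a..b,
        (β / Δt * ((htil x - hstar x) * v x) / Real.sqrt (1 + htil' x ^ 2) +
          (htil' x + hstar' x) * deriv v x /
            (Real.sqrt (1 + htil' x ^ 2) + Real.sqrt (1 + hstar' x ^ 2)))) = 0) :
    β / Δt * (∫ x in a..b, (htil x - hstar x) ^ 2 / Real.sqrt (1 + htil' x ^ 2)) +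
      (∫ x in a..b, (Real.sqrt (1 + htil' x ^ 2) - Real.sqrt (1 + hstar' x ^ 2))) = 0 := by
  have hvd : ∀ x ∈ Set.Icc a b, HasDerivWithinAt (fun y => htil y - hstar y)
      (htil' x - hstar' x) (Set.Icc a b) x := fun x hx => (hdt x hx).sub (hds x hx)
  have hcd : ContinuousOn (fun x => htil' x - hstar' x) (Set.Icc a b) := hct.sub hcs
  obtain ⟨C, hC⟩ := isCompact_Icc.exists_bound_of_continuousOn hcd
  have hlip : LipschitzOnWith C.toNNReal (fun y => htil y - hstar y) (Set.Icc a b) := by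
    refine (convex_Icc a b).lipschitzOnWith_of_nnnorm_hasDerivWithin_le hvd ?_
    intro x hx
    have h := hC x hx
    rw [← NNReal.coe_le_coe, coe_nnnorm]
    exact h.trans (Real.le_coe_toNNReal C)
  have hw := hweak _ _ hlip (by simp [hta, hsa]) (by simp [htb, hsb])
  have hpos : ∀ t : ℝ, 0 < Real.sqrt (1 + t ^ 2) := fun t => Real.sqrt_pos.2 (by positivity)
  have hct1 : ContinuousOn (fun x => Real.sqrt (1 + htil' x ^ 2)) (Set.Icc a b) :=
    (continuousOn_const.add (hct.pow 2)).sqrt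
  have hcs1 : ContinuousOn (fun x => Real.sqrt (1 + hstar' x ^ 2)) (Set.Icc a b) :=
    (continuousOn_const.add (hcs.pow 2)).sqrt
  have hcv : ContinuousOn (fun y => htil y - hstar y) (Set.Icc a b) :=
    fun x hx => (hvd x hx).continuousWithinAt
  have hI1 : IntervalIntegrable
      (fun x => (htil x - hstar x) ^ 2 / Real.sqrt (1 + htil' x ^ 2)) MeasureTheory.volume a b := by
    apply ContinuousOn.intervalIntegrable
    rw [Set.uIcc_of_le hab.le]
    exact (hcv.pow 2).div hct1 (fun x _ => (hpos _).ne')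
  have hI2 : IntervalIntegrable
      (fun x => Real.sqrt (1 + htil' x ^ 2) - Real.sqrt (1 + hstar' x ^ 2))
      MeasureTheory.volume a b := by
    apply ContinuousOn.intervalIntegrable
    rw [Set.uIcc_of_le hab.le]
    exact hct1.sub hcs1
  rw [← intervalIntegral.integral_const_mul,
    ← intervalIntegral.integral_add (hI1.const_mul _) hI2, ← hw,
    intervalIntegral.integral_of_le hab.le, intervalIntegral.integral_of_le hab.le,
    MeasureTheory.integral_Ioc_eq_integral_Ioo, MeasureTheory.integral_Ioc_eq_integral_Ioo]
  refine MeasureTheory.setIntegral_congr_fun measurableSet_Ioo ?_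
  intro x hx
  have hd : deriv (fun y => htil y - hstar y) x = htil' x - hstar' x :=
    ((hvd x (Set.Ioo_subset_Icc_self hx)).hasDerivAt (Icc_mem_nhds hx.1 hx.2)).deriv
  have key : (htil' x + hstar' x) * (htil' x - hstar' x) /
      (Real.sqrt (1 + htil' x ^ 2) + Real.sqrt (1 + hstar' x ^ 2)) =
      Real.sqrt (1 + htil' x ^ 2) - Real.sqrt (1 + hstar' x ^ 2) := by
    rw [div_eq_iff (add_pos (hpos _) (hpos _)).ne']
    have h1 := Real.sq_sqrt (show 0 ≤ 1 + htil' x ^ 2 by positivity)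
    have h2 := Real.sq_sqrt (show 0 ≤ 1 + hstar' x ^ 2 by positivity)
    linear_combination h2 - h1
  simp only [hd, key]
  ring
end

section
/- Let β > 0, Δt > 0, and σ ∈ ℝ with |σ| ≤ 1. Let aⁿ < bⁿ, let hⁿ : [aⁿ, bⁿ] → ℝ be continuously differentiable with hⁿ(aⁿ) = hⁿ(bⁿ) = 0, and let pₙ, qₙ ∈ ℝ. Define aⁿ⁺¹ = aⁿ + Δt·(σ + 1/√(1 + pₙ²)) and bⁿ⁺¹ = bⁿ − Δt·(σ + 1/√(1 + qₙ²)), and assume aⁿ⁺¹ < bⁿ⁺¹. Define the rescaled profile hⁿ*(x) = hⁿ( aⁿ + (bⁿ − aⁿ)·(x − aⁿ⁺¹)/(bⁿ⁺¹ − aⁿ⁺¹) ) for x ∈ [aⁿ⁺¹, bⁿ⁺¹]. Let h̃ⁿ⁺¹ : [aⁿ⁺¹, bⁿ⁺¹] → ℝ be continuously differentiable with zero boundary values and satisfying, for every Lipschitz v with zero boundary values, ∫ [ (β/Δt)·(h̃ⁿ⁺¹ − hⁿ*)·v/√(1 + (h̃ⁿ⁺¹′)²) + (h̃ⁿ⁺¹′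 + hⁿ*′)·v′/(√(1 + (h̃ⁿ⁺¹′)²) + √(1 + (hⁿ*′)²)) ] dx = 0. Set hⁿ⁺¹ = max{h̃ⁿ⁺¹, 0}. Then (β/Δt)·∫_{aⁿ⁺¹}^{bⁿ⁺¹} (h̃ⁿ⁺¹ − hⁿ*)²/√(1 + (h̃ⁿ⁺¹′)²) dx + ∫_{aⁿ⁺¹}^{bⁿ⁺¹} √(1 + ((hⁿ⁺¹)′)²) dx ≤ ∫_{aⁿ}^{bⁿ} √(1 + ((hⁿ)′)²) dx + 4·Δt, where (hⁿ⁺¹)′ is the almost-everywhere derivative of the Lipschitz function hⁿ⁺¹. -/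
lemma aux_max_deriv (f : ℝ → ℝ) (f' x : ℝ) (h : HasDerivAt f f' x) :
    deriv (fun y => max (f y) 0) x ^ 2 ≤ f' ^ 2 := by
  rcases lt_trichotomy (f x) 0 with hx | hx | hx
  · have he : (fun y => max (f y) 0) =ᶠ[nhds x] fun _ => (0 : ℝ) := by
      filter_upwards [h.continuousAt.eventually (gt_mem_nhds hx)] with y hy
      exact max_eq_right hy.le
    rw [he.deriv_eq]
    simp [sq_nonneg]
  · have hm : IsLocalMin (fun y => max (f y) 0) x := by
      refine Filter.Eventually.of_forall fun y => ?_
      simp [hx]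
    rw [hm.deriv_eq_zero]
    simp [sq_nonneg]
  · have he : (fun y => max (f y) 0) =ᶠ[nhds x] f := by
      filter_upwards [h.continuousAt.eventually (lt_mem_nhds hx)] with y hy
      exact max_eq_left hy.le
    rw [he.deriv_eq, h.deriv]

lemma aux_sqrt (l c p : ℝ) (hl : 0 < l) (hc : 0 ≤ c) (hlc : l ≤ 1 + c) :
    Real.sqrt (l ^ 2 + p ^ 2) ≤ Real.sqrt (1 + p ^ 2) + c := by
  have h1 : 1 ≤ Real.sqrt (1 + p ^ 2) := Real.one_le_sqrt.2 (by nlinarith [sq_nonneg p])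
  have h2 : Real.sqrt (1 + p ^ 2) ^ 2 = 1 + p ^ 2 := Real.sq_sqrt (by positivity)
  apply Real.sqrt_le_iff.2 ⟨by positivity, ?_⟩
  nlinarith [mul_le_mul_of_nonneg_left h1 hc]

lemma aux_alg (p q : ℝ) :
    (p + q) * (p - q) / (Real.sqrt (1 + p ^ 2) + Real.sqrt (1 + q ^ 2)) =
      Real.sqrt (1 + p ^ 2) - Real.sqrt (1 + q ^ 2) := by
  have h1 : 0 < Real.sqrt (1 + p ^ 2) := Real.sqrt_pos.2 (by positivity)
  have h2 : 0 < Real.sqrt (1 + q ^ 2) := Real.sqrt_pos.2 (by positivity)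
  have h3 : Real.sqrt (1 + p ^ 2) ^ 2 = 1 + p ^ 2 := Real.sq_sqrt (by positivity)
  have h4 : Real.sqrt (1 + q ^ 2) ^ 2 = 1 + q ^ 2 := Real.sq_sqrt (by positivity)
  rw [div_eq_iff (by positivity)]
  linear_combination h4 - h3

/-- One-step stability estimate for the projection scheme for droplet dynamics:
explicit boundary update, rescaling of the previous profile, semi-implicit
weak-form update of the capillary surface, and projection `hⁿ⁺¹ = max{h̃ⁿ⁺¹, 0}`
enforcing the obstacle condition. -/
theorem one_step_stability (β Δt σ : ℝ) (hβ : 0 < β) (hΔt : 0 < Δt) (hσ : |σ| ≤ 1)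
    (an bn : ℝ) (hab : an < bn)
    (hn hn' : ℝ → ℝ)
    (hdn : ∀ x ∈ Set.Icc an bn, HasDerivWithinAt hn (hn' x) (Set.Icc an bn) x)
    (hcn : ContinuousOn hn' (Set.Icc an bn))
    (hna : hn an = 0) (hnb : hn bn = 0)
    (pn qn an1 bn1 : ℝ)
    (han1 : an1 = an + Δt * (σ + 1 / Real.sqrt (1 + pn ^ 2)))
    (hbn1 : bn1 = bn - Δt * (σ + 1 / Real.sqrt (1 + qn ^ 2)))
    (hab1 : an1 < bn1)
    (hstar hstar' : ℝ → ℝ)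
    (hstardef : ∀ x, hstar x = hn (an + (bn - an) * (x - an1) / (bn1 - an1)))
    (hstar'def : ∀ x, hstar' x =
      hn' (an + (bn - an) * (x - an1) / (bn1 - an1)) * ((bn - an) / (bn1 - an1)))
    (htil htil' : ℝ → ℝ)
    (hdt : ∀ x ∈ Set.Icc an1 bn1, HasDerivWithinAt htil (htil' x) (Set.Icc an1 bn1) x)
    (hct : ContinuousOn htil' (Set.Icc an1 bn1))
    (hta : htil an1 = 0) (htb : htil bn1 = 0)
    (hweak : ∀ (v : ℝ → ℝ) (K : NNReal), LipschitzOnWith K v (Set.Icc an1 bn1) →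
      v an1 = 0 → v bn1 = 0 →
      (∫ x in an1..bn1,
        (β / Δt * ((htil x - hstar x) * v x) / Real.sqrt (1 + htil' x ^ 2) +
          (htil' x + hstar' x) * deriv v x /
            (Real.sqrt (1 + htil' x ^ 2) + Real.sqrt (1 + hstar' x ^ 2)))) = 0) :
    β / Δt * (∫ x in an1..bn1, (htil x - hstar x) ^ 2 / Real.sqrt (1 + htil' x ^ 2)) +
      (∫ x in an1..bn1, Real.sqrt (1 + deriv (fun y => max (htil y) 0) x ^ 2)) ≤
      (∫ x in an..bn, Real.sqrt (1 + hn' x ^ 2)) + 4 * Δt := by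
  have hL : 0 < bn - an := sub_pos.2 hab
  have hL1 : 0 < bn1 - an1 := sub_pos.2 hab1
  set s : ℝ := (bn - an) / (bn1 - an1) with hs
  have hs0 : 0 < s := div_pos hL hL1
  have hsL : s * (bn1 - an1) = bn - an := by rw [hs]; field_simp
  have harg : ∀ x, an + (bn - an) * (x - an1) / (bn1 - an1) = s * x + (an - s * an1) := by
    intro x; rw [hs]; ring
  simp only [harg] at hstardef hstar'def
  have hmaps : Set.MapsTo (fun x => s * x + (an - s * an1)) (Set.Icc an1 bn1) (Set.Icc an bn) := by
    intro x hx
    constructor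
    · have := mul_nonneg hs0.le (sub_nonneg.2 hx.1)
      dsimp only; linarith
    · have := mul_nonneg hs0.le (sub_nonneg.2 hx.2)
      dsimp only; linarith
  have hds : ∀ x ∈ Set.Icc an1 bn1, HasDerivWithinAt hstar (hstar' x) (Set.Icc an1 bn1) x := by
    intro x hx
    have h1 : HasDerivWithinAt (fun x => s * x + (an - s * an1)) s (Set.Icc an1 bn1) x := by
      simpa using (((hasDerivAt_id x).const_mul s).add_const (an - s * an1)).hasDerivWithinAt
    have h2 := (hdn _ (hmaps hx)).comp x h1 hmaps
    rw [hstar'def]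
    exact h2.congr_of_mem (fun y _ => hstardef y) hx
  have hcs : ContinuousOn hstar' (Set.Icc an1 bn1) := by
    have h1 : ContinuousOn (fun x => hn' (s * x + (an - s * an1)) * s) (Set.Icc an1 bn1) :=
      (hcn.comp (by fun_prop) hmaps).mul continuousOn_const
    exact h1.congr fun x _ => hstar'def x
  have hsa : hstar an1 = 0 := by rw [hstardef, ← hna]; congr 1; ring
  have hsb : hstar bn1 = 0 := by rw [hstardef, ← hnb]; congr 1; linarith
  have hdv : ∀ x ∈ Set.Icc an1 bn1, HasDerivWithinAt (fun y => htil y - hstar y)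
      (htil' x - hstar' x) (Set.Icc an1 bn1) x := fun x hx => (hdt x hx).sub (hds x hx)
  obtain ⟨C, hC⟩ := isCompact_Icc.exists_bound_of_continuousOn (hct.sub hcs)
  have hlip : LipschitzOnWith (Real.toNNReal C) (fun y => htil y - hstar y) (Set.Icc an1 bn1) := by
    apply (convex_Icc an1 bn1).lipschitzOnWith_of_nnnorm_hasDerivWithin_le hdv
    intro x hx
    rw [← NNReal.coe_le_coe, coe_nnnorm]
    exact (hC x hx).trans (Real.le_coe_toNNReal C)
  have hw := hweak _ _ hlip (by simp [hta, hsa]) (by simp [htb, hsb])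
  have hc1 : ContinuousOn (fun x => Real.sqrt (1 + htil' x ^ 2)) (Set.Icc an1 bn1) := by fun_prop
  have hc2 : ContinuousOn (fun x => Real.sqrt (1 + hstar' x ^ 2)) (Set.Icc an1 bn1) := by fun_prop
  have hct0 : ContinuousOn htil (Set.Icc an1 bn1) := fun x hx => (hdt x hx).continuousWithinAt
  have hcs0 : ContinuousOn hstar (Set.Icc an1 bn1) := fun x hx => (hds x hx).continuousWithinAt
  have hc3 : ContinuousOn (fun x => (htil x - hstar x) ^ 2 / Real.sqrt (1 + htil' x ^ 2))
      (Set.Icc an1 bn1) :=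
    ((hct0.sub hcs0).pow 2).div hc1 fun x _ => (Real.sqrt_pos.2 (by positivity)).ne'
  rw [← Set.uIcc_of_le hab1.le] at hc1 hc2 hc3
  have hi1 := hc1.intervalIntegrable (μ := MeasureTheory.volume)
  have hi2 := hc2.intervalIntegrable (μ := MeasureTheory.volume)
  have hi3 := hc3.intervalIntegrable (μ := MeasureTheory.volume)
  have hw2 : (∫ x in an1..bn1, (β / Δt * ((htil x - hstar x) ^ 2 / Real.sqrt (1 + htil' x ^ 2)) +
      (Real.sqrt (1 + htil' x ^ 2) - Real.sqrt (1 + hstar' x ^ 2)))) = 0 := by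
    rw [← hw, intervalIntegral.integral_of_le hab1.le, intervalIntegral.integral_of_le hab1.le,
      MeasureTheory.integral_Ioc_eq_integral_Ioo, MeasureTheory.integral_Ioc_eq_integral_Ioo]
    refine MeasureTheory.setIntegral_congr_fun measurableSet_Ioo fun x hx => ?_
    have hd := ((hdv x (Set.Ioo_subset_Icc_self hx)).hasDerivAt (Icc_mem_nhds hx.1 hx.2)).deriv
    rw [hd, aux_alg]
    ring
  rw [intervalIntegral.integral_add (hi3.const_mul _) (hi1.sub hi2),
    intervalIntegral.integral_sub hi1 hi2, intervalIntegral.integral_const_mul] at hw2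
  have hmax : (∫ x in an1..bn1, Real.sqrt (1 + deriv (fun y => max (htil y) 0) x ^ 2)) ≤
      ∫ x in an1..bn1, Real.sqrt (1 + htil' x ^ 2) := by
    have hi1' := (intervalIntegrable_iff_integrableOn_Ioo_of_le hab1.le).1 hi1
    rw [intervalIntegral.integral_of_le hab1.le, intervalIntegral.integral_of_le hab1.le,
      MeasureTheory.integral_Ioc_eq_integral_Ioo, MeasureTheory.integral_Ioc_eq_integral_Ioo]
    refine MeasureTheory.integral_mono_of_nonneg
      (Filter.Eventually.of_forall fun x => Real.sqrt_nonneg _) hi1' ?_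
    filter_upwards [MeasureTheory.ae_restrict_mem measurableSet_Ioo] with x hx
    apply Real.sqrt_le_sqrt
    have := aux_max_deriv htil (htil' x) x
      ((hdt x (Set.Ioo_subset_Icc_self hx)).hasDerivAt (Icc_mem_nhds hx.1 hx.2))
    linarith
  have hstarint : (∫ x in an1..bn1, Real.sqrt (1 + hstar' x ^ 2)) =
      ∫ x in an..bn, Real.sqrt (s⁻¹ ^ 2 + hn' x ^ 2) := by
    have h1 : ∀ x, Real.sqrt (1 + hstar' x ^ 2) =
        s * (fun y => Real.sqrt (s⁻¹ ^ 2 + hn' y ^ 2)) (s * x + (an - s * an1)) := by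
      intro x
      dsimp only
      rw [hstar'def]
      nth_rewrite 4 [← Real.sqrt_sq hs0.le]
      rw [← Real.sqrt_mul (sq_nonneg s)]
      congr 1
      field_simp
    simp only [h1]
    rw [intervalIntegral.integral_const_mul,
      intervalIntegral.integral_comp_mul_add
        (fun y => Real.sqrt (s⁻¹ ^ 2 + hn' y ^ 2)) hs0.ne', smul_eq_mul, ← mul_assoc,
      mul_inv_cancel₀ hs0.ne', one_mul]
    congr 1
    · ring
    · linarith
  have hlam : s⁻¹ ≤ 1 + 4 * Δt / (bn - an) := by
    have e : s⁻¹ = (bn1 - an1) / (bn - an) := by rw [hs, inv_div]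
    rw [e, div_le_iff₀ hL, add_mul, div_mul_cancel₀ _ hL.ne', han1, hbn1]
    have hp : 0 ≤ 1 / Real.sqrt (1 + pn ^ 2) := by positivity
    have hq : 0 ≤ 1 / Real.sqrt (1 + qn ^ 2) := by positivity
    have hσ' := (abs_le.1 hσ).1
    nlinarith [mul_nonneg hΔt.le hp, mul_nonneg hΔt.le hq,
      mul_nonneg hΔt.le (by linarith : 0 ≤ σ + 1)]
  have hfin : (∫ x in an..bn, Real.sqrt (s⁻¹ ^ 2 + hn' x ^ 2)) ≤
      (∫ x in an..bn, Real.sqrt (1 + hn' x ^ 2)) + 4 * Δt := by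
    have k1 : ContinuousOn (fun x => Real.sqrt (1 + hn' x ^ 2)) (Set.Icc an bn) := by fun_prop
    have k2 : ContinuousOn (fun x => Real.sqrt (s⁻¹ ^ 2 + hn' x ^ 2)) (Set.Icc an bn) := by fun_prop
    rw [← Set.uIcc_of_le hab.le] at k1 k2
    have j1 := k1.intervalIntegrable (μ := MeasureTheory.volume)
    have j2 := k2.intervalIntegrable (μ := MeasureTheory.volume)
    have e : (∫ x in an..bn, Real.sqrt (1 + hn' x ^ 2)) + 4 * Δt =
        ∫ x in an..bn, (Real.sqrt (1 + hn' x ^ 2) + 4 * Δt / (bn - an)) := by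
      rw [intervalIntegral.integral_add j1 intervalIntegrable_const,
        intervalIntegral.integral_const, smul_eq_mul, mul_div_cancel₀ _ hL.ne']
    rw [e]
    exact intervalIntegral.integral_mono_on hab.le j2 (j1.add intervalIntegrable_const)
      fun x _ => aux_sqrt _ _ _ (inv_pos.2 hs0) (by positivity) hlam
  linarith
end

section
/- Let T > 0, N a positive integer, Δt = T/N, β > 0, and σ ∈ ℝ with |σ| ≤ 1. Suppose given real sequences (aⁿ), (bⁿ) with aⁿ < bⁿ for 0 ≤ n ≤ N, arbitrary real slopes (pₙ), (qₙ), and functions h⁰ : [a⁰,b⁰] → ℝ Lipschitz with h⁰(a⁰) = h⁰(b⁰) = 0 and, for n = 0, …, N−1, continuously differentiable functions h̃ⁿ⁺¹ : [aⁿ⁺¹, bⁿ⁺¹] → ℝ with zero boundary values, such that for each n: (1) aⁿ⁺¹ = aⁿ + Δt·(σ + 1/√(1 + pₙ²)) and bⁿ⁺¹ = bⁿ − Δt·(σ + 1/√(1 + qₙ²)); (2) hⁿ*(x) = hⁿ( aⁿ + (bⁿ − aⁿ)·(x − aⁿ⁺¹)/(bⁿ⁺¹ − aⁿ⁺¹)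 ) on [aⁿ⁺¹, bⁿ⁺¹]; (3) for every Lipschitz v on [aⁿ⁺¹, bⁿ⁺¹] with zero boundary values, ∫ [ (β/Δt)·(h̃ⁿ⁺¹ − hⁿ*)·v/√(1 + (h̃ⁿ⁺¹′)²) + (h̃ⁿ⁺¹′ + hⁿ*′)·v′/(√(1 + (h̃ⁿ⁺¹′)²) + √(1 + (hⁿ*′)²)) ] dx = 0; (4) hⁿ⁺¹ = max{h̃ⁿ⁺¹, 0}. Then max_{1 ≤ n ≤ N} ∫_{aⁿ}^{bⁿ} √(1 + ((hⁿ)′)²) dx + (β/Δt)·Σ_{n=0}^{N−1} ∫_{aⁿ⁺¹}^{bⁿ⁺¹} (h̃ⁿ⁺¹ − hⁿ*)²/√(1 + (h̃ⁿ⁺¹′)²) dx ≤ 8·T + 2·∫_{a⁰}^{b⁰} √(1 + ((h⁰)′)²) dx, where derivatives of the Lipschitz functions hⁿ are almost-everywhere derivatives. -/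
open MeasureTheory Set in
lemma aux_ae_Ioo {a b : ℝ} (hab : a < b) {P : ℝ → Prop}
    (hP : ∀ᵐ x : ℝ, x ∈ Ioo a b → P x) : ∀ᵐ x : ℝ, x ∈ uIoc a b → P x := by
  have h1 : ∀ᵐ x : ℝ, x ≠ b := by
    rw [ae_iff]; simp
  filter_upwards [hP, h1] with x hx hxb hm
  rw [uIoc_of_le hab.le] at hm
  exact hx ⟨hm.1, lt_of_le_of_ne hm.2 hxb⟩

open MeasureTheory Set in
lemma aux_deriv_bound {a b : ℝ} {f : ℝ → ℝ} {K : NNReal}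
    (hf : LipschitzOnWith K f (Icc a b)) {x : ℝ} (hx : x ∈ Ioo a b) : |deriv f x| ≤ K := by
  have := norm_deriv_le_of_lipschitzOn (Icc_mem_nhds hx.1 hx.2) hf
  simpa using this

open MeasureTheory Set in
lemma aux_ae_diff {a b : ℝ} {f : ℝ → ℝ} {K : NNReal}
    (hf : LipschitzOnWith K f (Icc a b)) : ∀ᵐ x : ℝ, x ∈ Ioo a b → DifferentiableAt ℝ f x := by
  filter_upwards [hf.ae_differentiableWithinAt_of_mem] with x hx hm
  exact (hx (Ioo_subset_Icc_self hm)).differentiableAt (Icc_mem_nhds hm.1 hm.2)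

open MeasureTheory Set in
lemma aux_int {a b : ℝ} (hab : a < b) {f : ℝ → ℝ} {K : NNReal}
    (hf : LipschitzOnWith K f (Icc a b)) (s : ℝ) :
    IntervalIntegrable (fun x => Real.sqrt (s + deriv f x ^ 2)) volume a b := by
  have hm : Measurable (fun x => Real.sqrt (s + deriv f x ^ 2)) := by
    have := measurable_deriv f
    fun_prop
  refine IntervalIntegrable.mono_fun'
    (g := fun _ => Real.sqrt (s + (K:ℝ) ^ 2)) intervalIntegrable_const
    hm.aestronglyMeasurable ?_
  rw [Filter.EventuallyLE, ae_restrict_iff' measurableSet_uIoc]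
  refine aux_ae_Ioo hab (Filter.Eventually.of_forall fun x hx => ?_)
  rw [Real.norm_of_nonneg (Real.sqrt_nonneg _)]
  apply Real.sqrt_le_sqrt
  have := aux_deriv_bound hf hx
  have h2 : deriv f x ^ 2 ≤ (K:ℝ) ^ 2 := by
    apply sq_le_sq'
    · linarith [(abs_le.1 this).1]
    · exact (abs_le.1 this).2
  linarith

open MeasureTheory Set in
lemma aux_scale {a b c d : ℝ} (hab : a < b) (hcd : c < d) {f g : ℝ → ℝ} {K : NNReal}
    (hf : LipschitzOnWith K f (Icc a b)) {M : ℝ} (hM : 0 ≤ M) (hM' : (d - c) - (b - a) ≤ M)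
    (hg : ∀ x, g x = f (a + (b - a) * (x - c) / (d - c))) :
    (∫ x in c..d, Real.sqrt (1 + deriv g x ^ 2)) ≤
      (∫ x in a..b, Real.sqrt (1 + deriv f x ^ 2)) + M := by
  have hL : 0 < b - a := by linarith
  have hL' : 0 < d - c := by linarith
  set r := (b - a) / (d - c) with hr
  have hr0 : 0 < r := by positivity
  set e := a - r * c with he
  have hg' : g = fun x => f (r * x + e) := by
    funext x
    rw [hg]; congr 1; rw [he, hr]; field_simp; ring
  have hdg : ∀ x, deriv g x = r * deriv f (r * x + e) := by
    intro x
    rw [hg']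
    have := deriv_comp_mul_left r (fun y => f (y + e)) x
    rw [this, deriv_comp_add_const]; simp
  have e1 : r * c + e = a := by rw [he]; ring
  have e2 : r * d + e = b := by rw [he, hr]; field_simp; ring
  have h1 : (∫ x in c..d, Real.sqrt (1 + deriv g x ^ 2)) =
      r⁻¹ * ∫ y in a..b, Real.sqrt (1 + (r * deriv f y) ^ 2) := by
    simp_rw [hdg]
    rw [intervalIntegral.integral_comp_mul_add
      (fun y => Real.sqrt (1 + (r * deriv f y) ^ 2)) hr0.ne' e, e1, e2, smul_eq_mul]
  rw [h1, ← intervalIntegral.integral_const_mul]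
  have h2 : ∀ y, r⁻¹ * Real.sqrt (1 + (r * deriv f y) ^ 2) =
      Real.sqrt ((r⁻¹) ^ 2 + deriv f y ^ 2) := by
    intro y
    rw [← Real.sqrt_sq (inv_pos.2 hr0).le, ← Real.sqrt_mul (sq_nonneg _),
      Real.sqrt_sq (inv_pos.2 hr0).le]
    congr 1; field_simp
  simp_rw [h2]
  have h3 : (∫ _ in a..b, M / (b - a)) = M := by
    rw [intervalIntegral.integral_const, smul_eq_mul]; field_simp
  rw [← h3, ← intervalIntegral.integral_add (by simpa using aux_int hab hf 1)
    intervalIntegrable_const]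
  apply intervalIntegral.integral_mono_on hab.le (aux_int hab hf _)
    ((aux_int hab hf 1).add intervalIntegrable_const)
  intro x _
  have hm : 0 ≤ M / (b - a) := by positivity
  have hrm : r⁻¹ ≤ 1 + M / (b - a) := by
    rw [hr, inv_div, div_le_iff₀ hL]; field_simp; linarith
  have hri : 0 < r⁻¹ := inv_pos.2 hr0
  generalize M / (b - a) = m at *
  apply Real.sqrt_le_iff.2
  have hs := Real.sq_sqrt (show 0 ≤ 1 + deriv f x ^ 2 by positivity)
  have hs1 : 1 ≤ Real.sqrt (1 + deriv f x ^ 2) := by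
    rw [Real.one_le_sqrt]; nlinarith [sq_nonneg (deriv f x)]
  constructor
  · linarith
  · nlinarith [mul_nonneg hm (sub_nonneg.2 hs1)]

open MeasureTheory Set in
lemma aux_max {a b : ℝ} {u u' : ℝ → ℝ} (hd : ∀ x ∈ Icc a b, HasDerivWithinAt u (u' x) (Icc a b) x)
    {x : ℝ} (hx : x ∈ Ioo a b) : deriv (fun y => max (u y) 0) x ^ 2 ≤ u' x ^ 2 := by
  have hu := (hd x (Ioo_subset_Icc_self hx)).hasDerivAt (Icc_mem_nhds hx.1 hx.2)
  rcases lt_trichotomy (u x) 0 with h | h | h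
  · have : (fun y => max (u y) 0) =ᶠ[nhds x] fun _ => 0 := by
      filter_upwards [hu.continuousAt.eventually_lt continuousAt_const h] with y hy
      exact max_eq_right hy.le
    rw [this.deriv_eq]; simp; positivity
  · have : IsLocalMin (fun y => max (u y) 0) x := by
      refine Filter.Eventually.of_forall fun y => ?_
      simp [h]
    rw [this.deriv_eq_zero]; simp; positivity
  · have : (fun y => max (u y) 0) =ᶠ[nhds x] u := by
      filter_upwards [continuousAt_const.eventually_lt hu.continuousAt h] with y hy
      exact max_eq_left hy.le
    rw [this.deriv_eq, hu.deriv]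

open MeasureTheory Set in
lemma aux_lip {a b : ℝ} {u u' : ℝ → ℝ} (hd : ∀ x ∈ Icc a b, HasDerivWithinAt u (u' x) (Icc a b) x)
    (hc : ContinuousOn u' (Icc a b)) : ∃ K, LipschitzOnWith K u (Icc a b) := by
  obtain ⟨C, hC⟩ := isCompact_Icc.exists_bound_of_continuousOn hc
  refine ⟨C.toNNReal, (convex_Icc a b).lipschitzOnWith_of_nnnorm_hasDerivWithin_le hd ?_⟩
  intro x hx
  rw [← NNReal.coe_le_coe, coe_nnnorm]
  exact (hC x hx).trans (Real.le_coe_toNNReal C)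

open MeasureTheory Set in
lemma aux_lip_scale {a b c d : ℝ} (hab : a < b) (hcd : c < d) {f g : ℝ → ℝ} {K : NNReal}
    (hf : LipschitzOnWith K f (Icc a b))
    (hg : ∀ x, g x = f (a + (b - a) * (x - c) / (d - c))) :
    ∃ K', LipschitzOnWith K' g (Icc c d) := by
  have hL : 0 < b - a := by linarith
  have hL' : 0 < d - c := by linarith
  have hr0 : 0 ≤ (b - a) / (d - c) := by positivity
  refine ⟨K * ((b - a) / (d - c)).toNNReal, LipschitzOnWith.of_dist_le_mul ?_⟩
  have key : ∀ x ∈ Icc c d, a + (b - a) * (x - c) / (d - c) ∈ Icc a b := by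
    intro x hx
    have h1 : 0 ≤ x - c := by linarith [hx.1]
    constructor
    · have : 0 ≤ (b - a) * (x - c) / (d - c) := by positivity
      linarith
    · have : (b - a) * (x - c) / (d - c) ≤ b - a := by
        rw [div_le_iff₀ hL']
        exact mul_le_mul_of_nonneg_left (by linarith [hx.2]) hL.le
      linarith
  intro x hx y hy
  rw [hg, hg]
  refine (hf.dist_le_mul _ (key x hx) _ (key y hy)).trans_eq ?_
  rw [NNReal.coe_mul, Real.coe_toNNReal _ hr0, mul_assoc]
  congr 1
  rw [Real.dist_eq, Real.dist_eq, ← abs_of_nonneg hr0, ← abs_mul]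
  congr 1
  ring

open MeasureTheory Set in
lemma aux_step {c d κ : ℝ} (hcd : c < d) {u u' w : ℝ → ℝ} {K : NNReal}
    (hd : ∀ x ∈ Icc c d, HasDerivWithinAt u (u' x) (Icc c d) x)
    (hc : ContinuousOn u' (Icc c d)) (hua : u c = 0) (hub : u d = 0)
    (hw : LipschitzOnWith K w (Icc c d)) (hwa : w c = 0) (hwb : w d = 0)
    (hweak : ∀ (v : ℝ → ℝ) (K : NNReal),
      LipschitzOnWith K v (Icc c d) → v c = 0 → v d = 0 →
      (∫ x in c..d,
        (κ * ((u x - w x) * v x) / Real.sqrt (1 + u' x ^ 2) +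
          (u' x + deriv w x) * deriv v x /
            (Real.sqrt (1 + u' x ^ 2) + Real.sqrt (1 + deriv w x ^ 2)))) = 0) :
    (∫ x in c..d, Real.sqrt (1 + deriv (fun y => max (u y) 0) x ^ 2)) +
      κ * (∫ x in c..d, (u x - w x) ^ 2 / Real.sqrt (1 + u' x ^ 2)) ≤
      ∫ x in c..d, Real.sqrt (1 + deriv w x ^ 2) := by
  obtain ⟨Ku, hu⟩ := aux_lip hd hc
  have hmax : LipschitzOnWith Ku (fun y => max (u y) 0) (Icc c d) := by
    refine LipschitzOnWith.of_dist_le_mul fun x hx y hy => ?_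
    refine le_trans ?_ (hu.dist_le_mul x hx y hy)
    rw [Real.dist_eq, Real.dist_eq]
    exact abs_max_sub_max_le_abs _ _ _
  have hv := hweak (fun x => u x - w x) (Ku + K) (hu.sub hw) (by simp [hua, hwa])
    (by simp [hub, hwb])
  have hpos : ∀ x, 0 < Real.sqrt (1 + u' x ^ 2) := fun x => Real.sqrt_pos.2 (by positivity)
  have hsc : ContinuousOn (fun x => Real.sqrt (1 + u' x ^ 2)) (Icc c d) := by fun_prop
  have hI1 : IntervalIntegrable (fun x => Real.sqrt (1 + u' x ^ 2)) volume c d := by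
    apply ContinuousOn.intervalIntegrable; rwa [uIcc_of_le hcd.le]
  have hI2 : IntervalIntegrable (fun x => (u x - w x) ^ 2 / Real.sqrt (1 + u' x ^ 2))
      volume c d := by
    apply ContinuousOn.intervalIntegrable; rw [uIcc_of_le hcd.le]
    exact ((hu.continuousOn.sub hw.continuousOn).pow 2).div hsc fun x _ => (hpos x).ne'
  have hI3 := aux_int hcd hw 1
  have heq : (∫ x in c..d,
        (κ * ((u x - w x) * (u x - w x)) / Real.sqrt (1 + u' x ^ 2) +
          (u' x + deriv w x) * deriv (fun x => u x - w x) x /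
            (Real.sqrt (1 + u' x ^ 2) + Real.sqrt (1 + deriv w x ^ 2)))) =
      ∫ x in c..d, (κ * ((u x - w x) ^ 2 / Real.sqrt (1 + u' x ^ 2)) +
        (Real.sqrt (1 + u' x ^ 2) - Real.sqrt (1 + deriv w x ^ 2))) := by
    apply intervalIntegral.integral_congr_ae
    apply aux_ae_Ioo hcd
    filter_upwards [aux_ae_diff hw] with x hx hm
    have hux := (hd x (Ioo_subset_Icc_self hm)).hasDerivAt (Icc_mem_nhds hm.1 hm.2)
    have hdv : deriv (fun x => u x - w x) x = u' x - deriv w x :=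
      (hux.sub (hx hm).hasDerivAt).deriv
    rw [hdv]
    have p1 := hpos x
    have p2 : 0 < Real.sqrt (1 + deriv w x ^ 2) := Real.sqrt_pos.2 (by positivity)
    have s1 := Real.sq_sqrt (show 0 ≤ 1 + u' x ^ 2 by positivity)
    have s2 := Real.sq_sqrt (show 0 ≤ 1 + deriv w x ^ 2 by positivity)
    congr 1
    · ring
    · rw [div_eq_iff (by positivity)]
      linear_combination s2 - s1
  rw [heq, intervalIntegral.integral_add (hI2.const_mul κ) (hI1.sub hI3),
    intervalIntegral.integral_sub hI1 hI3, intervalIntegral.integral_const_mul] at hv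
  have hle : (∫ x in c..d, Real.sqrt (1 + deriv (fun y => max (u y) 0) x ^ 2)) ≤
      ∫ x in c..d, Real.sqrt (1 + u' x ^ 2) := by
    apply intervalIntegral.integral_mono_on_of_le_Ioo hcd.le (aux_int hcd hmax 1) hI1
    intro x hx
    apply Real.sqrt_le_sqrt
    linarith [aux_max hd hx]
  linarith

/-- Unconditional stability of the projection scheme for droplet dynamics with
moving contact lines and an impermeable obstacle: the capillary surface energy
plus the accumulated dissipation is bounded by `8T + 2·(initial surface energy)`,
for arbitrary time step `Δt = T/N`.  Derivatives of the Lipschitz profiles `hⁿ`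
are taken in the a.e. sense via `deriv`. -/
theorem unconditional_stability (T : ℝ) (hT : 0 < T) (N : ℕ) (hN : 0 < N)
    (Δt β σ : ℝ) (hΔt : Δt = T / (N : ℝ)) (hβ : 0 < β) (hσ : |σ| ≤ 1)
    (a b p q : ℕ → ℝ) (hab : ∀ n ≤ N, a n < b n)
    (h : ℕ → ℝ → ℝ) (htil htil' : ℕ → ℝ → ℝ) (K₀ : NNReal)
    (hh0 : LipschitzOnWith K₀ (h 0) (Set.Icc (a 0) (b 0)))
    (hh0a : h 0 (a 0) = 0) (hh0b : h 0 (b 0) = 0)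
    (hstar : ℕ → ℝ → ℝ)
    (hstardef : ∀ n, ∀ x, hstar n x =
      h n (a n + (b n - a n) * (x - a (n + 1)) / (b (n + 1) - a (n + 1))))
    (ha : ∀ n < N, a (n + 1) = a n + Δt * (σ + 1 / Real.sqrt (1 + p n ^ 2)))
    (hb : ∀ n < N, b (n + 1) = b n - Δt * (σ + 1 / Real.sqrt (1 + q n ^ 2)))
    (hdt : ∀ n < N, ∀ x ∈ Set.Icc (a (n + 1)) (b (n + 1)),
      HasDerivWithinAt (htil n) (htil' n x) (Set.Icc (a (n + 1)) (b (n + 1))) x)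
    (hct : ∀ n < N, ContinuousOn (htil' n) (Set.Icc (a (n + 1)) (b (n + 1))))
    (hta : ∀ n < N, htil n (a (n + 1)) = 0) (htb : ∀ n < N, htil n (b (n + 1)) = 0)
    (hweak : ∀ n < N, ∀ (v : ℝ → ℝ) (K : NNReal),
      LipschitzOnWith K v (Set.Icc (a (n + 1)) (b (n + 1))) →
      v (a (n + 1)) = 0 → v (b (n + 1)) = 0 →
      (∫ x in (a (n + 1))..(b (n + 1)),
        (β / Δt * ((htil n x - hstar n x) * v x) / Real.sqrt (1 + htil' n x ^ 2) +
          (htil' n x + deriv (hstar n) x) * deriv v x /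
            (Real.sqrt (1 + htil' n x ^ 2) +
              Real.sqrt (1 + deriv (hstar n) x ^ 2)))) = 0)
    (hproj : ∀ n < N, ∀ x, h (n + 1) x = max (htil n x) 0) :
    ∀ n, 1 ≤ n → n ≤ N →
      (∫ x in (a n)..(b n), Real.sqrt (1 + deriv (h n) x ^ 2)) +
        β / Δt * (∑ k ∈ Finset.range N,
          ∫ x in (a (k + 1))..(b (k + 1)),
            (htil k x - hstar k x) ^ 2 / Real.sqrt (1 + htil' k x ^ 2)) ≤
      8 * T + 2 * ∫ x in (a 0)..(b 0), Real.sqrt (1 + deriv (h 0) x ^ 2) := by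
  have hN' : (0:ℝ) < N := by exact_mod_cast hN
  have hdt0 : 0 < Δt := by rw [hΔt]; positivity
  have hTN : N * Δt = T := by rw [hΔt]; field_simp
  have hmaxeq : ∀ n < N, h (n + 1) = fun y => max (htil n y) 0 := fun n hn => funext (hproj n hn)
  -- regularity of the profiles
  have hreg : ∀ n ≤ N, (∃ K, LipschitzOnWith K (h n) (Set.Icc (a n) (b n))) ∧
      h n (a n) = 0 ∧ h n (b n) = 0 := by
    intro n hn
    cases n with
    | zero => exact ⟨⟨K₀, hh0⟩, hh0a, hh0b⟩
    | succ n =>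
      have hn' : n < N := hn
      obtain ⟨K, hK⟩ := aux_lip (hdt n hn') (hct n hn')
      refine ⟨⟨K, ?_⟩, by simp [hproj n hn', hta n hn'], by simp [hproj n hn', htb n hn']⟩
      rw [hmaxeq n hn']
      refine LipschitzOnWith.of_dist_le_mul fun x hx y hy => ?_
      refine le_trans ?_ (hK.dist_le_mul x hx y hy)
      rw [Real.dist_eq, Real.dist_eq]
      exact abs_max_sub_max_le_abs _ _ _
  set E : ℕ → ℝ := fun n => ∫ x in (a n)..(b n), Real.sqrt (1 + deriv (h n) x ^ 2) with hE
  set D : ℕ → ℝ := fun k => ∫ x in (a (k + 1))..(b (k + 1)),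
            (htil k x - hstar k x) ^ 2 / Real.sqrt (1 + htil' k x ^ 2) with hD
  have hE0 : ∀ n ≤ N, 0 ≤ E n := fun n hn =>
    intervalIntegral.integral_nonneg (hab n hn).le fun x _ => Real.sqrt_nonneg _
  have hD0 : ∀ n < N, 0 ≤ D n := fun n hn =>
    intervalIntegral.integral_nonneg (hab (n + 1) hn).le fun x _ => by positivity
  have hκ : 0 < β / Δt := by positivity
  have step : ∀ n < N, E (n + 1) + β / Δt * D n ≤ E n + 2 * Δt := by
    intro n hn
    obtain ⟨⟨K, hK⟩, h0a, h0b⟩ := hreg n hn.le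
    have hab0 := hab n hn.le
    have hab1 := hab (n + 1) hn
    obtain ⟨K', hK'⟩ := aux_lip_scale hab0 hab1 hK (hstardef n)
    have hne : b (n + 1) - a (n + 1) ≠ 0 := by linarith
    have h1 := aux_step hab1 (hdt n hn) (hct n hn) (hta n hn) (htb n hn) hK'
      (by rw [hstardef]; simpa using h0a)
      (by rw [hstardef, mul_div_assoc, div_self hne]; simpa using h0b) (hweak n hn)
    rw [← hmaxeq n hn] at h1
    have h2 := aux_scale hab0 hab1 hK (M := 2 * Δt) (by positivity) (by
      rw [ha n hn, hb n hn]
      have q1 : 0 ≤ 1 / Real.sqrt (1 + p n ^ 2) := by positivity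
      have q2 : 0 ≤ 1 / Real.sqrt (1 + q n ^ 2) := by positivity
      have q3 := (abs_le.1 hσ).1
      nlinarith [mul_nonneg hdt0.le q1, mul_nonneg hdt0.le q2,
        mul_nonneg hdt0.le (show 0 ≤ σ + 1 by linarith)]) (hstardef n)
    exact h1.trans h2
  have tot : ∀ n ≤ N, E n + β / Δt * ∑ k ∈ Finset.range n, D k ≤ E 0 + n * (2 * Δt) := by
    intro n
    induction n with
    | zero => intro _; simp
    | succ n ih =>
      intro hn
      have := ih (by omega)
      have := step n hn
      rw [Finset.sum_range_succ]
      push_cast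
      linarith
  intro n _ hn
  have t1 := tot n hn
  have t2 := tot N le_rfl
  have t3 := hE0 N le_rfl
  have t4 : 0 ≤ β / Δt * ∑ k ∈ Finset.range n, D k :=
    mul_nonneg hκ.le (Finset.sum_nonneg fun k hk =>
      hD0 k (by have := Finset.mem_range.1 hk; omega))
  have t5 : (n:ℝ) * Δt ≤ N * Δt :=
    mul_le_mul_of_nonneg_right (by exact_mod_cast hn) hdt0.le
  change E n + β / Δt * ∑ k ∈ Finset.range N, D k ≤ 8 * T + 2 * E 0
  linarith
end

section
/- Let (D, μ) be a measure space with 0 < μ(D) < ∞, let ũ : D → ℝ be integrable, and let V > 0 satisfy ∫_D ũ dμ = V. Then there exists a unique λ* ∈ ℝ such that ∫_D max{ũ(x) + λ*, 0} dμ(x) = V, and moreover λ* ≤ 0. -/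
open MeasureTheory

/-- Existence and uniqueness of the Lagrange multiplier in the projection lemma:
there is a unique `λ*` with `∫ max(ũ + λ*, 0) dμ = V`, and any such `λ*` is
nonpositive. -/
theorem lagrange_multiplier_exists_unique {Ω : Type*} [MeasurableSpace Ω]
    (μ : Measure Ω) (hpos : 0 < μ Set.univ) (hfin : μ Set.univ < ⊤)
    (u : Ω → ℝ) (hu : Integrable u μ) (V : ℝ) (hV : 0 < V)
    (hvol : ∫ x, u x ∂μ = V) :
    (∃! l : ℝ, ∫ x, max (u x + l) 0 ∂μ = V) ∧
      ∀ l : ℝ, (∫ x, max (u x + l) 0 ∂μ = V) → l ≤ 0 := by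
  haveI : IsFiniteMeasure μ := ⟨hfin⟩
  have hint : ∀ l : ℝ, Integrable (fun x => max (u x + l) 0) μ := fun l =>
    (hu.add (integrable_const l)).pos_part
  have hmono : ∀ l m : ℝ, l ≤ m →
      ∫ x, max (u x + l) 0 ∂μ ≤ ∫ x, max (u x + m) 0 ∂μ := fun l m h =>
    integral_mono (hint l) (hint m) (fun x => max_le_max (by linarith) le_rfl)
  have key : ∀ l m : ℝ, l < m →
      ∫ x, max (u x + l) 0 ∂μ = ∫ x, max (u x + m) 0 ∂μ →
      ∫ x, max (u x + l) 0 ∂μ = 0 := by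
    intro l m h heq
    have h1 := (integral_eq_iff_of_ae_le (hint l) (hint m)
      (Filter.Eventually.of_forall
        (fun x => max_le_max (by linarith) le_rfl))).1 heq
    apply integral_eq_zero_of_ae
    filter_upwards [h1] with x hx
    simp only [Pi.zero_apply] at *
    grind
  have h0 : V ≤ ∫ x, max (u x + 0) 0 ∂μ := by
    rw [← hvol]
    exact integral_mono hu (hint 0) (fun x => by simp)
  have hbd : ∀ l : ℝ, l ≤ 0 → ∀ x, ‖max (u x + l) 0‖ ≤ ‖u x‖ := by
    intro l hl x
    rw [Real.norm_eq_abs, Real.norm_eq_abs, abs_of_nonneg (le_max_right _ _)]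
    exact max_le (by linarith [le_abs_self (u x)]) (abs_nonneg _)
  have hlim : Filter.Tendsto (fun n : ℕ => ∫ x, max (u x + -(n : ℝ)) 0 ∂μ)
      Filter.atTop (nhds (∫ _, (0 : ℝ) ∂μ)) := by
    refine tendsto_integral_of_dominated_convergence (fun x => ‖u x‖)
      (fun n => (hint _).aestronglyMeasurable) hu.norm
      (fun n => Filter.Eventually.of_forall (hbd _ (by simp)))
      (Filter.Eventually.of_forall fun x => ?_)
    obtain ⟨N, hN⟩ := exists_nat_ge (u x)
    refine tendsto_const_nhds.congr' ?_
    filter_upwards [Filter.eventually_ge_atTop N] with n hn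
    have : (N : ℝ) ≤ n := by exact_mod_cast hn
    exact (max_eq_right (by linarith)).symm
  rw [integral_zero] at hlim
  obtain ⟨N, hN⟩ := (hlim.eventually (gt_mem_nhds hV)).exists
  have hcont : ContinuousOn (fun l : ℝ => ∫ x, max (u x + l) 0 ∂μ)
      (Set.Icc (-(N : ℝ)) 0) := by
    refine continuousOn_of_dominated (bound := fun x => ‖u x‖)
      (fun l _ => (hint l).aestronglyMeasurable)
      (fun l hl => Filter.Eventually.of_forall (hbd l hl.2)) hu.norm
      (Filter.Eventually.of_forall fun x => ?_)
    fun_prop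
  obtain ⟨l, _, hl⟩ := intermediate_value_Icc (by simp) hcont ⟨hN.le, h0⟩
  simp only at hl
  refine ⟨⟨l, hl, fun m hm => ?_⟩, fun m hm => ?_⟩
  · simp only at hm
    rcases lt_trichotomy m l with h | h | h
    · have := key m l h (hm.trans hl.symm)
      linarith
    · exact h
    · have := key l m h (hl.trans hm.symm)
      linarith
  · by_contra! h
    have h2 := hmono 0 m h.le
    have := key 0 m h (by linarith)
    linarith
end
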